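/- Let α ∈ ℝ^L satisfy the Diophantine condition |j·α| ≥ C‖j‖^{−s} for all nonzero j ∈ ℤ^L, with C > 0, s > 1. Let f : 𝕋^L → ℂ be smooth with zero mean. Then there is a smooth g : 𝕋^L → ℂ whose directional derivative along α equals f, i.e., (d/dt)|_{t=0} g(θ + tα) = f(θ) for all θ. -/

import Mathlib

open Complex MeasureTheory

/-- Fourier coefficient of a `2π`-periodic function on `ℝ^L`. -/
noncomputable def torusFourierCoef (L : ℕ) (f : (Fin L → ℝ) → ℂ) (j : Fin L → ℤ) : ℂ :=
  (((2 * Real.pi) ^ L : ℝ) : ℂ)⁻¹ *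
    ∫ θ in Set.univ.pi fun _ : Fin L => Set.Icc (0 : ℝ) (2 * Real.pi),
      Complex.exp (-I * ∑ l, (j l : ℂ) * (θ l : ℂ)) * f θ

/-- `f` is `2π ℤ^L`-periodic. -/
def TorusPeriodic (L : ℕ) (f : (Fin L → ℝ) → ℂ) : Prop :=
  ∀ (θ : Fin L → ℝ) (m : Fin L → ℤ), f (θ + fun l => 2 * Real.pi * (m l)) = f θ

lemma aux_summable (L : ℕ) : ∃ M : ℕ, 0 < M ∧ Summable fun j : Fin L → ℤ => (‖j‖⁻¹) ^ M := by
  classical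
  let Λ : Submodule ℤ (Fin L → ℝ) := Submodule.span ℤ (Set.range (Pi.basisFun ℝ (Fin L)))
  refine ⟨Module.finrank ℤ Λ + 1, by omega, ?_⟩
  have h := ZLattice.summable_norm_pow_inv Λ (Module.finrank ℤ Λ + 1) (by omega)
  have hmem : ∀ j : Fin L → ℤ, (fun l => (j l : ℝ)) ∈ Λ := by
    intro j
    rw [Module.Basis.mem_span_iff_repr_mem]
    intro i
    exact ⟨j i, by simp⟩
  let φ : (Fin L → ℤ) → Λ := fun j => ⟨fun l => (j l : ℝ), hmem j⟩
  have hφ : Function.Injective φ := by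
    intro a b hab
    funext l
    have := congrFun (congrArg Subtype.val hab) l
    simpa [φ] using this
  have h2 := h.comp_injective hφ
  refine h2.congr fun j => ?_
  have : ‖φ j‖ = ‖j‖ := by
    change ‖fun l => (j l : ℝ)‖ = ‖j‖
    simp only [Pi.norm_def]
    congr 2
  exact congrArg (fun t : ℝ => t⁻¹ ^ (Module.finrank ℤ Λ + 1)) this

lemma aux_divergence (L : ℕ) (l : Fin L) (h : (Fin L → ℝ) → ℂ) (hh : ContDiff ℝ 1 h)
    (hp : ∀ x, h (x + Pi.single l 1) = h x) :
    ∫ x in Set.Icc (0 : Fin L → ℝ) 1, fderiv ℝ h x (Pi.single l 1) = 0 := by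
  obtain ⟨n, rfl⟩ : ∃ n, L = n + 1 := ⟨L - 1, by have := l.2; omega⟩
  have hcont : Continuous fun x => fderiv ℝ h x (Pi.single l 1) :=
    (hh.continuous_fderiv (by norm_num)).clm_apply continuous_const
  have key := integral_divergence_of_hasFDerivAt_off_countable' (E := ℂ) (0 : Fin (n+1) → ℝ) 1
    (by intro i; simp)
    (fun i x => if i = l then h x else 0)
    (fun i x => if i = l then fderiv ℝ h x else 0) ∅ (by simp)
    (by
      intro i
      by_cases hi : i = l
      · simpa [hi] using hh.continuous.continuousOn
      · simpa [hi] using continuousOn_const)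
    (by
      intro x _ i
      by_cases hi : i = l
      · simpa [hi] using (hh.differentiable (by norm_num) x).hasFDerivAt
      · simpa [hi] using hasFDerivAt_const _ _)
    (by
      have : (fun x : Fin (n+1) → ℝ => ∑ i, (if i = l then fderiv ℝ h x else 0) (Pi.single i (1:ℝ)))
          = fun x => fderiv ℝ h x (Pi.single l 1) := by
        funext x
        rw [Finset.sum_eq_single l]
        · simp
        · intro b _ hb; simp [hb]
        · simp
      rw [this]
      exact hcont.continuousOn.integrableOn_compact isCompact_Icc)
  have e1 : ∀ x : Fin (n+1) → ℝ, ∑ i, (if i = l then fderiv ℝ h x else 0) (Pi.single i (1:ℝ))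
          = fderiv ℝ h x (Pi.single l 1) := by
    intro x
    rw [Finset.sum_eq_single l]
    · simp
    · intro b _ hb; simp [hb]
    · simp
  simp only [e1] at key
  rw [key]
  refine Finset.sum_eq_zero fun i _ => ?_
  by_cases hi : i = l
  · subst hi
    rw [sub_eq_zero]
    congr 1
    funext x
    simp only [if_true]
    rw [← hp (Fin.insertNth i ((0 : Fin (n + 1) → ℝ) i) x)]
    congr 1
    funext k
    refine Fin.succAboveCases i ?_ (fun k => ?_) k
    · simp
    · simp [Fin.insertNth_apply_succAbove]
  · simp [hi]

noncomputable def auxE (L : ℕ) (j : Fin L → ℤ) (x : Fin L → ℝ) : ℂ :=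
  Complex.exp (-(2 * Real.pi * I) * ∑ l, (j l : ℂ) * (x l : ℂ))

noncomputable def auxCf (L : ℕ) (F : (Fin L → ℝ) → ℂ) (j : Fin L → ℤ) : ℂ :=
  ∫ x in Set.Icc (0 : Fin L → ℝ) 1, auxE L j x * F x

lemma auxE_norm (L : ℕ) (j : Fin L → ℤ) (x : Fin L → ℝ) : ‖auxE L j x‖ = 1 := by
  have : (-(2 * Real.pi * I) * ∑ l, (j l : ℂ) * (x l : ℂ)) =
    ((-(2 * Real.pi) * ∑ l, (j l : ℝ) * (x l : ℝ) : ℝ) : ℂ) * I := by push_cast; ring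
  rw [auxE, this, Complex.norm_exp_ofReal_mul_I]

lemma auxE_contDiff (L : ℕ) (j : Fin L → ℤ) (n : WithTop ℕ∞) : ContDiff ℝ n (auxE L j) := by
  unfold auxE
  apply ContDiff.cexp
  apply ContDiff.mul contDiff_const
  apply ContDiff.sum
  intro i _
  apply ContDiff.mul contDiff_const
  exact (Complex.ofRealCLM.contDiff).comp (contDiff_apply ℝ ℝ i)

lemma auxE_periodic (L : ℕ) (j m : Fin L → ℤ) (x : Fin L → ℝ) :
    auxE L j (x + fun l => (m l : ℝ)) = auxE L j x := by
  unfold auxE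
  rw [Complex.exp_eq_exp_iff_exists_int]
  refine ⟨-∑ l, j l * m l, ?_⟩
  push_cast
  simp only [Pi.add_apply]
  push_cast
  simp only [mul_add, Finset.sum_add_distrib]
  ring

lemma auxE_fderiv (L : ℕ) (j : Fin L → ℤ) (x : Fin L → ℝ) (l : Fin L) :
    fderiv ℝ (auxE L j) x (Pi.single l 1) = -(2 * Real.pi * I * j l) * auxE L j x := by
  have hd : DifferentiableAt ℝ (auxE L j) x := (auxE_contDiff L j 1).differentiable (by norm_num) x
  have h1 : HasDerivAt (fun t : ℝ => auxE L j (x + t • (Pi.single l 1 : Fin L → ℝ)))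
      (fderiv ℝ (auxE L j) x (Pi.single l 1)) 0 := by
    have := hd.hasFDerivAt.hasLineDerivAt (Pi.single l 1)
    exact this
  have e : ∀ t : ℝ, auxE L j (x + t • (Pi.single l 1 : Fin L → ℝ)) =
      Complex.exp (-(2 * Real.pi * I) * (∑ i, (j i : ℂ) * (x i : ℂ)) +
        -(2 * Real.pi * I * j l) * (t : ℂ)) := by
    intro t
    unfold auxE
    congr 1
    have : ∀ i, (j i : ℂ) * (((x + t • (Pi.single l 1 : Fin L → ℝ)) i : ℝ) : ℂ)
        = (j i : ℂ) * (x i : ℂ) + if i = l then (j l : ℂ) * t else 0 := by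
      intro i
      by_cases hi : i = l
      · subst hi; simp; ring
      · simp [hi]
    simp only [this, Finset.sum_add_distrib]
    simp
    ring
  have h2 : HasDerivAt (fun t : ℝ => auxE L j (x + t • (Pi.single l 1 : Fin L → ℝ)))
      (-(2 * Real.pi * I * j l) * auxE L j x) 0 := by
    simp only [e]
    have h3 : HasDerivAt (fun t : ℝ => -(2 * Real.pi * I) * (∑ i, (j i : ℂ) * (x i : ℂ)) +
        -(2 * Real.pi * I * j l) * (t : ℂ)) (-(2 * Real.pi * I * j l)) 0 := by
      have := ((Complex.ofRealCLM.hasDerivAt (x := (0:ℝ))).const_mul (-(2 * Real.pi * I * (j l : ℂ)))).const_add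
        (-(2 * Real.pi * I) * (∑ i, (j i : ℂ) * (x i : ℂ)))
      simpa using this
    have := h3.cexp
    convert this using 1
    unfold auxE
    simp
    ring
  exact h1.unique h2

lemma auxCf_deriv (L : ℕ) (F : (Fin L → ℝ) → ℂ) (hF : ContDiff ℝ (⊤ : ℕ∞) F)
    (hp : ∀ (x : Fin L → ℝ) (m : Fin L → ℤ), F (x + fun l => (m l : ℝ)) = F x)
    (j : Fin L → ℤ) (l : Fin L) :
    auxCf L (fun x => fderiv ℝ F x (Pi.single l 1)) j = 2 * Real.pi * I * j l * auxCf L F j := by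
  have hF1 : ContDiff ℝ 1 F := hF.of_le (by exact_mod_cast le_top)
  have key := aux_divergence L l (fun x => auxE L j x * F x) ((auxE_contDiff L j 1).mul hF1) (by
    intro x
    have hs : (Pi.single l 1 : Fin L → ℝ) = fun k => (((Pi.single l 1 : Fin L → ℤ) k : ℤ) : ℝ) := by
      funext k
      by_cases hk : k = l
      · subst hk; simp
      · simp [hk]
    rw [hs, auxE_periodic, hp])
  have e : ∀ x, fderiv ℝ (fun x => auxE L j x * F x) x (Pi.single l 1) =
      auxE L j x * fderiv ℝ F x (Pi.single l 1) - (2 * Real.pi * I * j l) * (auxE L j x * F x) := by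
    intro x
    rw [fderiv_fun_mul ((auxE_contDiff L j 1).differentiable (by norm_num) x)
      (hF1.differentiable (by norm_num) x)]
    simp only [add_apply, smul_apply, smul_eq_mul, auxE_fderiv]
    ring
  have hc0 : Continuous (auxE L j) := (auxE_contDiff L j 1).continuous
  have hc1 : Continuous fun x => fderiv ℝ F x (Pi.single l 1) :=
    (hF1.continuous_fderiv (by norm_num)).clm_apply continuous_const
  simp only [e] at key
  have hi1 : IntegrableOn (fun x => auxE L j x * fderiv ℝ F x (Pi.single l 1))
      (Set.Icc (0 : Fin L → ℝ) 1) :=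
    (hc0.mul hc1).continuousOn.integrableOn_compact isCompact_Icc
  have hi2 : IntegrableOn (fun x => (2 * Real.pi * I * j l) * (auxE L j x * F x))
      (Set.Icc (0 : Fin L → ℝ) 1) :=
    (continuous_const.mul (hc0.mul hF1.continuous)).continuousOn.integrableOn_compact isCompact_Icc
  rw [integral_sub hi1 hi2, integral_const_mul, sub_eq_zero] at key
  exact key

lemma aux_periodic_fderiv (L : ℕ) (F : (Fin L → ℝ) → ℂ)
    (hp : ∀ (x : Fin L → ℝ) (m : Fin L → ℤ), F (x + fun l => (m l : ℝ)) = F x)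
    (x : Fin L → ℝ) (m : Fin L → ℤ) :
    fderiv ℝ F (x + fun l => (m l : ℝ)) = fderiv ℝ F x := by
  rw [← fderiv_comp_add_right]
  simp only [hp]

lemma auxCf_decay_one (L : ℕ) (l : Fin L) (N : ℕ) : ∀ (F : (Fin L → ℝ) → ℂ)
    (_ : ContDiff ℝ (⊤ : ℕ∞) F)
    (_ : ∀ (x : Fin L → ℝ) (m : Fin L → ℤ), F (x + fun l => (m l : ℝ)) = F x),
    ∃ K : ℝ, ∀ j : Fin L → ℤ, |(j l : ℝ)| ^ N * ‖auxCf L F j‖ ≤ K := by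
  induction N with
  | zero =>
    intro F hF hp
    refine ⟨∫ x in Set.Icc (0 : Fin L → ℝ) 1, ‖F x‖, fun j => ?_⟩
    rw [pow_zero, one_mul]
    refine (norm_integral_le_integral_norm _).trans (le_of_eq ?_)
    simp [auxE_norm]
  | succ N ih =>
    intro F hF hp
    obtain ⟨K, hK⟩ := ih (fun x => fderiv ℝ F x (Pi.single l 1))
      ((hF.fderiv_right (m := (⊤ : ℕ∞)) (by simp)).clm_apply contDiff_const)
      (fun x m => by rw [aux_periodic_fderiv L F hp])
    refine ⟨K, fun j => ?_⟩
    have := hK j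
    rw [auxCf_deriv L F hF hp] at this
    simp only [norm_mul, Complex.norm_intCast, Complex.norm_I, Complex.norm_ofNat,
      Complex.norm_real, Real.norm_eq_abs, abs_of_pos Real.pi_pos, mul_one] at this
    refine le_trans ?_ this
    have h1 : 1 ≤ 2 * Real.pi := by linarith [Real.pi_gt_three]
    have h2 : 0 ≤ |(j l : ℝ)| ^ N * (|(j l : ℝ)| * ‖auxCf L F j‖) := by positivity
    rw [pow_succ]
    nlinarith

lemma auxCf_decay (L : ℕ) (F : (Fin L → ℝ) → ℂ) (hF : ContDiff ℝ (⊤ : ℕ∞) F)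
    (hp : ∀ (x : Fin L → ℝ) (m : Fin L → ℤ), F (x + fun l => (m l : ℝ)) = F x)
    (h0 : auxCf L F 0 = 0) (N : ℕ) :
    ∃ K : ℝ, 0 ≤ K ∧ ∀ j : Fin L → ℤ, ‖auxCf L F j‖ ≤ K * (‖j‖⁻¹) ^ N := by
  choose K hK using fun l => auxCf_decay_one L l N F hF hp
  refine ⟨∑ l, |K l|, by positivity, fun j => ?_⟩
  by_cases hj : j = 0
  · subst hj; rw [h0, norm_zero]; positivity
  have hpos : 0 < ‖j‖ := norm_pos_iff.2 hj
  have hne : Nonempty (Fin L) := by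
    by_contra hc
    rw [not_nonempty_iff] at hc
    exact hj (Subsingleton.elim _ _)
  obtain ⟨l, hl⟩ : ∃ l, ‖j‖ = |(j l : ℝ)| := by
    obtain ⟨l, -, hl⟩ := Finset.exists_mem_eq_sup Finset.univ Finset.univ_nonempty (fun l => ‖j l‖₊)
    refine ⟨l, ?_⟩
    rw [Pi.norm_def, hl]
    simp [Int.norm_eq_abs]
  rw [inv_pow, ← div_eq_mul_inv, le_div_iff₀ (by positivity), mul_comm, hl]
  exact (hK l j).trans ((le_abs_self _).trans
    (Finset.single_le_sum (f := fun l => |K l|) (fun i _ => abs_nonneg _) (Finset.mem_univ l)))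

lemma aux_hasSum (L : ℕ) (F : (Fin L → ℝ) → ℂ) (hF : Continuous F)
    (hp : ∀ (x : Fin L → ℝ) (m : Fin L → ℤ), F (x + fun l => (m l : ℝ)) = F x)
    (hs : Summable (auxCf L F)) (x : Fin L → ℝ) :
    HasSum (fun j => auxCf L F j * Complex.exp (2 * Real.pi * I * ∑ l, (j l : ℂ) * (x l : ℂ))) (F x) := by
  have hq : IsOpenQuotientMap (Pi.map (fun (_ : Fin L) (y : ℝ) => (y : UnitAddCircle))) :=
    IsOpenQuotientMap.piMap fun _ => QuotientAddGroup.isOpenQuotientMap_mk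
  have hlift : ∀ a b : Fin L → ℝ, Pi.map (fun (_ : Fin L) (y : ℝ) => (y : UnitAddCircle)) a =
      Pi.map (fun (_ : Fin L) (y : ℝ) => (y : UnitAddCircle)) b → F a = F b := by
    intro a b hab
    have : ∀ l, ∃ m : ℤ, a l = b l + m := by
      intro l
      have h1 : ((a l : ℝ) : UnitAddCircle) = (b l : ℝ) := congrFun hab l
      rw [eq_comm, QuotientAddGroup.eq, AddSubgroup.mem_zmultiples_iff] at h1
      obtain ⟨m, hm⟩ := h1
      refine ⟨m, ?_⟩
      simp at hm
      linarith
    choose m hm using this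
    rw [← hp b m]
    congr 1
    funext l
    exact hm l
  let Φ : C(UnitAddTorus (Fin L), ℂ) :=
    Topology.IsQuotientMap.lift (f := ⟨_, hq.continuous⟩) hq.isQuotientMap ⟨F, hF⟩ hlift
  have hΦ : ∀ y : Fin L → ℝ, Φ (fun i => (y i : UnitAddCircle)) = F y := by
    intro y
    exact DFunLike.congr_fun 
      (Topology.IsQuotientMap.lift_comp (f := ⟨_, hq.continuous⟩) hq.isQuotientMap ⟨F, hF⟩ hlift) y
  have hm : ∀ (j : Fin L → ℤ) (y : Fin L → ℝ), UnitAddTorus.mFourier j (fun i => (y i : UnitAddCircle)) =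
      Complex.exp (2 * Real.pi * I * ∑ l, (j l : ℂ) * (y l : ℂ)) := by
    intro j y
    simp only [UnitAddTorus.mFourier, ContinuousMap.coe_mk, fourier_coe_apply]
    rw [← Complex.exp_sum, Finset.mul_sum]
    congr 1
    refine Finset.sum_congr rfl fun i _ => ?_
    simp
    ring
  have hco : ∀ j, UnitAddTorus.mFourierCoeff Φ j = auxCf L F j := by
    intro j
    rw [UnitAddTorus.mFourierCoeff_eq_integral _ _ 0, auxCf]
    have hset : {x : Fin L → ℝ | ∀ i, x i ∈ Set.Ioc ((0 : Fin L → ℝ) i) ((0 : Fin L → ℝ) i + 1)} =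
      Set.pi Set.univ fun i => Set.Ioc ((0 : Fin L → ℝ) i) ((1 : Fin L → ℝ) i) := by
      ext x; simp
    rw [hset, volume_pi, setIntegral_congr_set Measure.univ_pi_Ioc_ae_eq_Icc]
    congr 1
    funext y
    rw [hΦ, hm, auxE, smul_eq_mul]
    congr 2
    simp
  have hs' : Summable (UnitAddTorus.mFourierCoeff Φ) := by
    have : UnitAddTorus.mFourierCoeff Φ = auxCf L F := funext hco
    rwa [this]
  have := UnitAddTorus.hasSum_mFourier_series_apply_of_summable hs' (fun i => (x i : UnitAddCircle))
  rw [hΦ] at this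
  simpa only [hco, hm, smul_eq_mul] using this

noncomputable def auxA (L : ℕ) (j : Fin L → ℤ) : (Fin L → ℝ) →L[ℝ] ℝ :=
  ∑ l, (j l : ℝ) • ContinuousLinearMap.proj l

lemma auxA_apply (L : ℕ) (j : Fin L → ℤ) (x : Fin L → ℝ) :
    auxA L j x = ∑ l, (j l : ℝ) * x l := by
  simp [auxA, _root_.sum_apply]

lemma aux_natAbs_le (L : ℕ) (j : Fin L → ℤ) : ∑ l, ((j l).natAbs : ℝ) ≤ L * ‖j‖ := by
  calc ∑ l, ((j l).natAbs : ℝ) ≤ ∑ _l : Fin L, ‖j‖ := by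
        refine Finset.sum_le_sum fun l _ => ?_
        have := norm_le_pi_norm j l
        rw [Int.norm_eq_abs] at this
        rwa [Nat.cast_natAbs, Int.cast_abs]
    _ = L * ‖j‖ := by simp

lemma auxA_norm (L : ℕ) (j : Fin L → ℤ) : ‖auxA L j‖ ≤ L * ‖j‖ := by
  refine ContinuousLinearMap.opNorm_le_bound _ (by positivity) fun x => ?_
  rw [auxA_apply]
  refine (norm_sum_le _ _).trans ?_
  refine le_trans ?_ (mul_le_mul_of_nonneg_right (aux_natAbs_le L j) (norm_nonneg x))
  rw [Finset.sum_mul]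
  refine Finset.sum_le_sum fun l _ => ?_
  rw [norm_mul, Nat.cast_natAbs, Int.cast_abs, Real.norm_eq_abs]
  exact mul_le_mul_of_nonneg_left (norm_le_pi_norm x l) (abs_nonneg _)

lemma aux_iter (d : ℂ) (k : ℕ) :
    iteratedDeriv k (fun t : ℝ => d * Complex.exp (t * I)) =
      fun t : ℝ => I ^ k * d * Complex.exp (t * I) := by
  induction k with
  | zero => simp
  | succ k ih =>
    rw [iteratedDeriv_succ, ih]
    funext t
    have h1 : HasDerivAt (fun t : ℝ => (t : ℂ) * I) I t := by
      simpa using (Complex.ofRealCLM.hasDerivAt (x := t)).mul_const I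
    rw [(h1.cexp.const_mul (I ^ k * d)).deriv]
    ring

lemma aux_contDiff1 (d : ℂ) (n : WithTop ℕ∞) :
    ContDiff ℝ n (fun t : ℝ => d * Complex.exp (t * I)) :=
  contDiff_const.mul ((Complex.ofRealCLM.contDiff.mul contDiff_const).cexp)

lemma aux_iterF (L : ℕ) (d : ℂ) (j : Fin L → ℤ) (k : ℕ) (x : Fin L → ℝ) :
    ‖iteratedFDeriv ℝ k (fun θ => d * Complex.exp ((auxA L j θ : ℝ) * I)) x‖
      ≤ ‖d‖ * (L * ‖j‖) ^ k := by
  have h := (auxA L j).iteratedFDeriv_comp_right (f := fun t : ℝ => d * Complex.exp (t * I))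
    (aux_contDiff1 d k) x (i := k) le_rfl
  change ‖iteratedFDeriv ℝ k ((fun t : ℝ => d * Complex.exp (t * I)) ∘ (auxA L j)) x‖ ≤ _
  rw [h]
  refine (ContinuousMultilinearMap.norm_compContinuousLinearMap_le _ _).trans ?_
  rw [norm_iteratedFDeriv_eq_norm_iteratedDeriv, aux_iter]
  simp only [norm_mul, norm_pow, Complex.norm_I, one_pow, one_mul,
    Complex.norm_exp_ofReal_mul_I, mul_one, Finset.prod_const, Finset.card_univ, Fintype.card_fin]
  gcongr
  exact auxA_norm L j

/-- If `α` satisfies the Diophantine condition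
`|j·α| ≥ C‖j‖^{−s}` for all nonzero `j ∈ ℤ^L` and `f` is smooth on the torus
with zero mean, then there is a smooth torus function `g` whose directional
derivative along `α` equals `f`. -/
theorem smooth_cohomological_equation_flow
    (L : ℕ) (α : Fin L → ℝ) (C s : ℝ) (hC : 0 < C) (hs : 1 < s)
    (hdio : ∀ j : Fin L → ℤ, j ≠ 0 →
      |∑ l, (j l : ℝ) * α l| ≥ C * ((∑ l, (j l).natAbs : ℝ)) ^ (-s))
    (f : (Fin L → ℝ) → ℂ) (hf : ContDiff ℝ (⊤ : ℕ∞) f) (hper : TorusPeriodic L f)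
    (hmean : torusFourierCoef L f 0 = 0) :
    ∃ g : (Fin L → ℝ) → ℂ, ContDiff ℝ (⊤ : ℕ∞) g ∧ TorusPeriodic L g ∧
      ∀ θ : Fin L → ℝ, deriv (fun t : ℝ => g (θ + t • α)) 0 = f θ := by
  have hpi : (0 : ℝ) < 2 * Real.pi := by positivity
  set F : (Fin L → ℝ) → ℂ := fun x => f ((2 * Real.pi) • x) with hFdef
  have hF : ContDiff ℝ (⊤ : ℕ∞) F := hf.comp (contDiff_const_smul _)
  have hFp : ∀ (x : Fin L → ℝ) (m : Fin L → ℤ), F (x + fun l => (m l : ℝ)) = F x := by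
    intro x m
    simp only [hFdef]
    rw [← hper ((2 * Real.pi) • x) m]
    congr 1
    funext l
    simp
    ring
  have h0 : auxCf L F 0 = 0 := by
    open scoped Pointwise in
    have hbox : (2 * Real.pi) • Set.Icc (0 : Fin L → ℝ) 1 =
        Set.univ.pi fun _ : Fin L => Set.Icc (0 : ℝ) (2 * Real.pi) := by
      ext x
      rw [Set.mem_smul_set_iff_inv_smul_mem₀ hpi.ne']
      simp only [Set.mem_Icc, Pi.le_def, Set.mem_pi, Set.mem_univ, true_implies, Pi.smul_apply,
        smul_eq_mul, Pi.zero_apply, Pi.one_apply, ← forall_and]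
      refine forall_congr' fun i => ?_
      rw [inv_mul_le_iff₀ hpi, mul_one, mul_nonneg_iff_of_pos_left (inv_pos.2 hpi)]
    have h1 := Measure.setIntegral_comp_smul_of_pos (volume : Measure (Fin L → ℝ)) f
      (Set.Icc (0 : Fin L → ℝ) 1) hpi
    rw [hbox] at h1
    have h2 : auxCf L F 0 = ∫ x in Set.Icc (0 : Fin L → ℝ) 1, f ((2 * Real.pi) • x) := by
      simp [auxCf, auxE, hFdef]
    rw [h2, h1]
    have h3 : ∫ x in Set.univ.pi fun _ : Fin L => Set.Icc (0 : ℝ) (2 * Real.pi), f x = 0 := by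
      unfold torusFourierCoef at hmean
      rcases mul_eq_zero.1 hmean with h | h
      · exfalso
        rw [inv_eq_zero] at h
        have : ((2 * Real.pi) ^ L : ℝ) = 0 := by exact_mod_cast h
        exact absurd this (by positivity)
      · simpa using h
    rw [h3, smul_zero]
  obtain ⟨M, hM, hsum⟩ := aux_summable L
  set c := auxCf L F with hc
  set d : (Fin L → ℤ) → ℂ := fun j => c j / (I * (auxA L j α : ℝ)) with hd
  have hdec := auxCf_decay L F hF hFp h0
  have hApos : ∀ j : Fin L → ℤ, j ≠ 0 → 0 < ∑ l, ((j l).natAbs : ℝ) ∧ 1 ≤ ∑ l, ((j l).natAbs : ℝ) := by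
    intro j hj
    obtain ⟨l, hl⟩ := Function.ne_iff.1 hj
    have h1 : 1 ≤ ∑ l, ((j l).natAbs : ℝ) := by
      have h2 : (1 : ℝ) ≤ ((j l).natAbs : ℝ) := by
        exact_mod_cast Int.natAbs_pos.2 hl
      exact h2.trans (Finset.single_le_sum (f := fun l => ((j l).natAbs : ℝ))
        (fun i _ => by positivity) (Finset.mem_univ l))
    exact ⟨by linarith, h1⟩
  have hAne : ∀ j : Fin L → ℤ, j ≠ 0 → auxA L j α ≠ 0 := by
    intro j hj h
    have := hdio j hj
    rw [← auxA_apply, h, abs_zero] at this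
    have h2 : 0 < C * (∑ l, ((j l).natAbs : ℝ)) ^ (-s) :=
      mul_pos hC (Real.rpow_pos_of_pos (hApos j hj).1 _)
    linarith
  have hdA : ∀ j, d j * (I * (auxA L j α : ℝ)) = c j := by
    intro j
    by_cases hj : j = 0
    · subst hj; simp [hd, h0]
    · simp only [hd]
      rw [div_mul_cancel₀]
      exact mul_ne_zero I_ne_zero (by exact_mod_cast hAne j hj)
  have hddec : ∀ N : ℕ, ∃ K : ℝ, 0 ≤ K ∧ ∀ j, ‖d j‖ ≤ K * (‖j‖⁻¹) ^ N := by
    intro N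
    obtain ⟨K, hK0, hK⟩ := hdec (⌈s⌉₊ + N)
    refine ⟨K * C⁻¹ * (L : ℝ) ^ ⌈s⌉₊, by positivity, fun j => ?_⟩
    by_cases hj : j = 0
    · subst hj
      simp only [hd, h0, zero_div, norm_zero]
      positivity
    obtain ⟨hn0, hn1⟩ := hApos j hj
    have hjpos : 0 < ‖j‖ := norm_pos_iff.2 hj
    have hb : |auxA L j α|⁻¹ ≤ C⁻¹ * ((L : ℝ) * ‖j‖) ^ ⌈s⌉₊ := by
      have h1 := hdio j hj
      rw [← auxA_apply] at h1
      have h2 : 0 < C * (∑ l, ((j l).natAbs : ℝ)) ^ (-s) :=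
        mul_pos hC (Real.rpow_pos_of_pos hn0 _)
      refine (inv_anti₀ h2 h1).trans ?_
      rw [mul_inv, Real.rpow_neg hn0.le, inv_inv]
      refine mul_le_mul_of_nonneg_left ?_ (by positivity)
      calc (∑ l, ((j l).natAbs : ℝ)) ^ s ≤ (∑ l, ((j l).natAbs : ℝ)) ^ (⌈s⌉₊ : ℝ) :=
            Real.rpow_le_rpow_of_exponent_le hn1 (Nat.le_ceil s)
        _ = (∑ l, ((j l).natAbs : ℝ)) ^ ⌈s⌉₊ := Real.rpow_natCast _ _
        _ ≤ _ := pow_le_pow_left₀ hn0.le (aux_natAbs_le L j) _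
    calc ‖d j‖ = ‖c j‖ * |auxA L j α|⁻¹ := by
          simp [hd, div_eq_mul_inv]
      _ ≤ (K * (‖j‖⁻¹) ^ (⌈s⌉₊ + N)) * (C⁻¹ * ((L : ℝ) * ‖j‖) ^ ⌈s⌉₊) := by
          gcongr
          exact hK j
      _ = K * C⁻¹ * (L : ℝ) ^ ⌈s⌉₊ * (‖j‖⁻¹) ^ N := by
          rw [mul_pow, pow_add]
          have : (‖j‖⁻¹) ^ ⌈s⌉₊ * ‖j‖ ^ ⌈s⌉₊ = 1 := by
            rw [← mul_pow, inv_mul_cancel₀ hjpos.ne', one_pow]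
          linear_combination (K * C⁻¹ * (L : ℝ) ^ ⌈s⌉₊ * (‖j‖⁻¹) ^ N) * this
  have hcsum : Summable (fun j => ‖c j‖) := by
    obtain ⟨K, hK0, hK⟩ := hdec M
    exact Summable.of_nonneg_of_le (fun _ => norm_nonneg _) hK (hsum.mul_left K)
  have hdsum : Summable (fun j => ‖d j‖) := by
    obtain ⟨K, hK0, hK⟩ := hddec M
    exact Summable.of_nonneg_of_le (fun _ => norm_nonneg _) hK (hsum.mul_left K)
  refine ⟨fun θ => ∑' j, d j * Complex.exp ((auxA L j θ : ℝ) * I), ?_, ?_, ?_⟩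
  · choose K hK0 hK using hddec
    refine contDiff_tsum (v := fun k j => (K (k + M) * (L : ℝ) ^ k) * (‖j‖⁻¹) ^ M) ?_ ?_ ?_
    · intro j
      exact (aux_contDiff1 (d j) _).comp (auxA L j).contDiff
    · intro k _
      exact hsum.mul_left _
    · intro k j x _
      refine (aux_iterF L (d j) j k x).trans ?_
      by_cases hj : j = 0
      · subst hj
        have : d 0 = 0 := by simp [hd, h0]
        rw [this, norm_zero, zero_mul]
        have := hK0 (k + M)
        positivity
      have hjpos : 0 < ‖j‖ := norm_pos_iff.2 hj
      calc ‖d j‖ * (L * ‖j‖) ^ k ≤ (K (k + M) * (‖j‖⁻¹) ^ (k + M)) * (L * ‖j‖) ^ k := by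
            gcongr
            exact hK _ j
        _ = _ := by
          rw [mul_pow, pow_add]
          have : (‖j‖⁻¹) ^ k * ‖j‖ ^ k = 1 := by
            rw [← mul_pow, inv_mul_cancel₀ hjpos.ne', one_pow]
          linear_combination (K (k + M) * (L : ℝ) ^ k * (‖j‖⁻¹) ^ M) * this
  · intro θ m
    refine tsum_congr fun j => ?_
    congr 1
    rw [Complex.exp_eq_exp_iff_exists_int]
    refine ⟨∑ l, j l * m l, ?_⟩
    rw [map_add, auxA_apply, auxA_apply]
    push_cast
    rw [add_mul, Finset.sum_mul (s := Finset.univ) (f := fun l => (j l : ℂ) * (m l : ℂ)),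
      Finset.sum_mul (s := Finset.univ) (f := fun l => (j l : ℂ) * (2 * (Real.pi : ℂ) * (m l : ℂ)))]
    congr 1
    refine Finset.sum_congr rfl fun l _ => ?_
    ring
  · intro θ
    have key := hasDerivAt_tsum (𝕜 := ℝ) (F := ℂ) (u := fun j => ‖c j‖)
      (g := fun j (t : ℝ) => d j * Complex.exp ((auxA L j (θ + t • α) : ℝ) * I))
      (g' := fun j (t : ℝ) => c j * Complex.exp ((auxA L j (θ + t • α) : ℝ) * I))
      (y₀ := 0) hcsum
      (by
        intro j t
        have h1 : HasDerivAt (fun t : ℝ => ((auxA L j (θ + t • α) : ℝ) : ℂ) * I)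
            ((auxA L j α : ℝ) * I) t := by
          have h2 : HasDerivAt (fun t : ℝ => auxA L j θ + t * auxA L j α) (auxA L j α) t := by
            simpa using ((hasDerivAt_id t).mul_const (auxA L j α)).const_add (auxA L j θ)
          have h3 := (h2.ofReal_comp).mul_const I
          simpa only [map_add, map_smul, smul_eq_mul] using h3
        have h4 := h1.cexp.const_mul (d j)
        have h5 : d j * (Complex.exp ((auxA L j (θ + t • α) : ℝ) * I) * ((auxA L j α : ℝ) * I)) =
            c j * Complex.exp ((auxA L j (θ + t • α) : ℝ) * I) := by
          rw [← hdA j]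
          ring
        rw [h5] at h4
        exact h4)
      (by
        intro j t
        rw [norm_mul, Complex.norm_exp_ofReal_mul_I, mul_one])
      (by
        refine Summable.of_norm ?_
        simpa only [norm_mul, Complex.norm_exp_ofReal_mul_I, mul_one] using hdsum)
      0
    rw [key.deriv]
    have hS := aux_hasSum L F hF.continuous hFp hcsum.of_norm ((2 * Real.pi)⁻¹ • θ)
    have hFθ : F ((2 * Real.pi)⁻¹ • θ) = f θ := by
      simp only [hFdef]
      rw [smul_inv_smul₀ hpi.ne']
    rw [← hFθ, ← hS.tsum_eq]
    refine tsum_congr fun j => ?_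
    rw [zero_smul, add_zero, auxA_apply]
    congr 2
    push_cast
    rw [Finset.sum_mul, Finset.mul_sum]
    refine Finset.sum_congr rfl fun l _ => ?_
    have : (Real.pi : ℂ) ≠ 0 := by exact_mod_cast Real.pi_ne_zero
    simp only [Pi.smul_apply, smul_eq_mul]
    push_cast
    field_simp
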